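/- arXiv:2006.01116 — 2 statements merged into one kernel-verified Lean document; each statement's English description precedes it below -/
import Mathlib

section
/- Let D be a digraph with m arcs and minimum outdegree d ≥ 4, let X, Y be a partition of V(D) with e(X) = 0, and set θ := min{|θ(X₁,X₂)| : X₁,X₂ a partition of X}. Let ε > 0 and suppose every y ∈ Y satisfies d(y) ≤ ε²m/4. Then either there exists a bipartition V(D) = V₁ ∪ V₂ with min{e(V₁,V₂), e(V₂,V₁)} ≥ ((d−1)/(2(2d−1)) − ε)·m, or θ > m/(2d−1). -/
open Finset

/-- Number of arcs of the digraph `A` directed from a vertex of `S` to a vertex of `T`. -/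
def dArcs {V : Type} [Fintype V] [DecidableEq V] (A : V → V → Prop) [DecidableRel A]
    (S T : Finset V) : ℕ :=
  ((S ×ˢ T).filter fun p => A p.1 p.2).card

/-- Outdegree of `x`. -/
def outDeg {V : Type} [Fintype V] (A : V → V → Prop) [DecidableRel A] (x : V) : ℕ :=
  (Finset.univ.filter fun y => A x y).card

/-- Indegree of `x`. -/
def inDeg {V : Type} [Fintype V] (A : V → V → Prop) [DecidableRel A] (x : V) : ℕ :=
  (Finset.univ.filter fun y => A y x).card

/-- Degree of `x`: outdegree plus indegree. -/
def deg {V : Type} [Fintype V] (A : V → V → Prop) [DecidableRel A] (x : V) : ℕ :=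
  outDeg A x + inDeg A x

/-- `s(x) = max{d⁺(x) − d⁻(x), d⁻(x) − d⁺(x)}`. -/
def sVal {V : Type} [Fintype V] (A : V → V → Prop) [DecidableRel A] (x : V) : ℤ :=
  max ((outDeg A x : ℤ) - (inDeg A x : ℤ)) ((inDeg A x : ℤ) - (outDeg A x : ℤ))

/-- The gap `θ(X₁,X₂) = (e(X₁,Y)+e(Y,X₂)) − (e(X₂,Y)+e(Y,X₁))`. -/
def gap {V : Type} [Fintype V] [DecidableEq V] (A : V → V → Prop) [DecidableRel A]
    (X₁ X₂ Y : Finset V) : ℤ :=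
  ((dArcs A X₁ Y : ℤ) + (dArcs A Y X₂ : ℤ)) - ((dArcs A X₂ Y : ℤ) + (dArcs A Y X₁ : ℤ))

/-! Keep `X₁` and `X₂` on their sides and put each vertex of `Y` on either side with probability
`1/2`. Since `X` spans no arcs, the expected numbers of forward and backward arcs are
`(m ± θ(X₁, X₂)) / 4`, and `(m - m / (2d - 1)) / 4 = (d - 1) / (2(2d - 1)) * m`. The pair of these
numbers is affine in the weight of each vertex `y`, with slope at most `d(y)`, so rounding the
weights one vertex at a time, each time to the better of `0` and `1`, moves the pair by a squared
distance of at most `∑_{y ∈ Y} d(y)² / 4`. This is at most `(ε m)²` because the degrees are small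
and sum to `2m`. -/

section Rounding

variable {ι E : Type*} [DecidableEq ι] [NormedAddCommGroup E] [InnerProductSpace ℝ E]

/-- `F` is affine in each coordinate separately on the unit cube, and its squared slope in the
coordinate `i` is at most `b i`. This is all that rounding a fractional cut requires of the cut
values. -/
def CoordAffine (F : (ι → ℝ) → E) (b : ι → ℝ) : Prop :=
  ∀ p ∈ Set.Icc (0 : ι → ℝ) 1, ∀ i, ∃ s : E, ‖s‖ ^ 2 ≤ b i ∧
    ∀ t : ℝ, F (Function.update p i t) = F p + (t - p i) • s

theorem update_eq_add_smul_single (p : ι → ℝ) (v : ι) (t : ℝ) :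
    Function.update p v t = p + (t - p v) • Pi.single v 1 := by
  ext u
  obtain rfl | h := eq_or_ne u v <;> simp [*]

theorem norm_sq_combo_eq (w s : E) (t : ℝ) :
    (1 - t) * ‖w - t • s‖ ^ 2 + t * ‖w + (1 - t) • s‖ ^ 2 = ‖w‖ ^ 2 + t * (1 - t) * ‖s‖ ^ 2 := by
  rw [norm_sub_sq_real, norm_add_sq_real, inner_smul_right, inner_smul_right, norm_smul,
    norm_smul, mul_pow, mul_pow, Real.norm_eq_abs, Real.norm_eq_abs, sq_abs, sq_abs]
  ring

theorem CoordAffine.exists_update_norm_sub_sq_le {F : (ι → ℝ) → E} {b : ι → ℝ}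
    (hF : CoordAffine F b) {p : ι → ℝ} (hp : p ∈ Set.Icc 0 1) (i : ι) (a : E) :
    ∃ t : ℝ, (t = 0 ∨ t = 1) ∧
      ‖F (Function.update p i t) - a‖ ^ 2 ≤ ‖F p - a‖ ^ 2 + p i * (1 - p i) * b i := by
  obtain ⟨s, hs, hFs⟩ := hF p hp i
  have hp₀ : 0 ≤ p i := hp.1 i
  have hp₁ : 0 ≤ 1 - p i := sub_nonneg.2 (hp.2 i)
  have h_zero : F (Function.update p i 0) - a = F p - a - p i • s := by rw [hFs]; module
  have h_one : F (Function.update p i 1) - a = F p - a + (1 - p i) • s := by rw [hFs]; module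
  have h_avg : (1 - p i) * ‖F (Function.update p i 0) - a‖ ^ 2 +
      p i * ‖F (Function.update p i 1) - a‖ ^ 2 ≤ ‖F p - a‖ ^ 2 + p i * (1 - p i) * b i := by
    rw [h_zero, h_one, norm_sq_combo_eq]
    gcongr
  rcases min_le_iff.1 ((Convex.min_le_combo _ _ hp₁ hp₀ (sub_add_cancel 1 (p i))).trans h_avg)
    with h | h
  exacts [⟨0, .inl rfl, h⟩, ⟨1, .inr rfl, h⟩]

theorem CoordAffine.exists_partial_rounding {F : (ι → ℝ) → E} {b : ι → ℝ} (hF : CoordAffine F b)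
    {p : ι → ℝ} (hp : p ∈ Set.Icc 0 1) (a : E) (S : Finset ι) :
    ∃ q : ι → ℝ, (∀ i ∈ S, q i = 0 ∨ q i = 1) ∧ (∀ i ∉ S, q i = p i) ∧
      ‖F q - a‖ ^ 2 ≤ ‖F p - a‖ ^ 2 + ∑ i ∈ S, p i * (1 - p i) * b i := by
  induction S using Finset.induction_on with
  | empty => exact ⟨p, by simp⟩
  | insert i S hi ih =>
    obtain ⟨q, hq_int, hq_off, hq_le⟩ := ih
    have hq : q ∈ Set.Icc 0 1 := by
      rw [← Set.pi_univ_Icc]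
      intro j _
      by_cases hj : j ∈ S
      · rcases hq_int j hj with h | h <;> simp [h]
      · rw [hq_off j hj]
        exact ⟨hp.1 j, hp.2 j⟩
    obtain ⟨t, ht, ht_le⟩ := hF.exists_update_norm_sub_sq_le hq i a
    refine ⟨Function.update q i t, fun j hj => ?_, fun j hj => ?_, ?_⟩
    · obtain rfl | hji := eq_or_ne j i
      · rwa [Function.update_self]
      · rw [Function.update_of_ne hji]
        exact hq_int j (mem_of_mem_insert_of_ne hj hji)
    · rw [mem_insert, not_or] at hj
      rw [Function.update_of_ne hj.1, hq_off j hj.2]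
    · rw [hq_off i hi] at ht_le
      rw [sum_insert hi]
      linarith

/-- The right-hand side bounds the variance of `F` under independent rounding with probabilities
`p`, so this is a derandomized second-moment bound. -/
theorem CoordAffine.exists_indicator_norm_sub_sq_le [Fintype ι] {F : (ι → ℝ) → E} {b : ι → ℝ}
    (hF : CoordAffine F b) {p : ι → ℝ} (hp : p ∈ Set.Icc 0 1) :
    ∃ W : Finset ι, ‖F ((W : Set ι).indicator 1) - F p‖ ^ 2 ≤ ∑ i, p i * (1 - p i) * b i := by
  obtain ⟨q, hq_int, -, hq_le⟩ := hF.exists_partial_rounding hp (F p) univ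
  have hq : ({i | q i = 1} : Set ι).indicator 1 = q := by
    ext i
    rcases hq_int i (mem_univ i) with h | h <;> simp [h]
  exact ⟨univ.filter (q · = 1), by simpa [hq] using hq_le⟩

end Rounding

section HalfCut

variable {ι : Type*}

theorem indicator_coe_union [DecidableEq ι] {S T : Finset ι} (h : Disjoint S T) :
    ((S ∪ T : Finset ι) : Set ι).indicator (1 : ι → ℝ) =
      (S : Set ι).indicator 1 + (T : Set ι).indicator 1 := by
  rw [coe_union, Set.indicator_union_of_disjoint (disjoint_coe.2 h)]
  rfl

/-- The fractional cut that splits the vertices of `Y` evenly and puts those of `X` entirely on the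
first side. -/
noncomputable def halfCut (X Y : Finset ι) : ι → ℝ :=
  (X : Set ι).indicator 1 + (1 / 2 : ℝ) • (Y : Set ι).indicator 1

variable {X Y : Finset ι}

theorem halfCut_apply [DecidableEq ι] (h : Disjoint X Y) (v : ι) :
    halfCut X Y v = if v ∈ X then 1 else if v ∈ Y then 1 / 2 else 0 := by
  by_cases hX : v ∈ X
  · simp [halfCut, hX, disjoint_left.1 h hX]
  · by_cases hY : v ∈ Y <;> simp [halfCut, hX, hY]

theorem halfCut_mem_Icc (h : Disjoint X Y) : halfCut X Y ∈ Set.Icc 0 1 := by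
  classical
  constructor <;> intro v <;> rw [halfCut_apply h] <;> split_ifs <;> norm_num

theorem sum_halfCut_mul_one_sub [Fintype ι] (h : Disjoint X Y) (b : ι → ℝ) :
    ∑ v, halfCut X Y v * (1 - halfCut X Y v) * b v = (∑ v ∈ Y, b v) / 4 := by
  classical
  have h_term : ∀ v, halfCut X Y v * (1 - halfCut X Y v) * b v = if v ∈ Y then b v / 4 else 0 := by
    intro v
    rw [halfCut_apply h]
    by_cases hX : v ∈ X
    · simp [hX, disjoint_left.1 h hX]
    · split_ifs <;> ring
  simp only [h_term, sum_ite_mem, univ_inter, sum_div]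

theorem one_sub_halfCut [Fintype ι] [DecidableEq ι] {X₁ X₂ : Finset ι}
    (hX : Disjoint X₁ X₂) (hY : Disjoint (X₁ ∪ X₂) Y)
    (h_univ : X₁ ∪ X₂ ∪ Y = univ) : 1 - halfCut X₁ Y = halfCut X₂ Y := by
  have h_one : (1 : ι → ℝ) = (X₁ : Set ι).indicator 1 + (X₂ : Set ι).indicator 1 +
      (Y : Set ι).indicator 1 := by
    rw [← indicator_coe_union hX, ← indicator_coe_union hY, h_univ, coe_univ, Set.indicator_univ]
  rw [sub_eq_iff_eq_add, halfCut, halfCut]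
  exact h_one.trans (by module)

end HalfCut

section ArcForm

variable {V : Type} [Fintype V] [DecidableEq V] (A : V → V → Prop) [DecidableRel A]

/-- The bilinear form of the adjacency matrix of `A`, which extends `dArcs` from pairs of vertex
sets (as indicator functions) to pairs of weight functions. -/
noncomputable def arcForm : LinearMap.BilinForm ℝ (V → ℝ) :=
  Matrix.toBilin' (Matrix.of fun u v => if A u v then (1 : ℝ) else 0)

theorem arcForm_apply (p q : V → ℝ) :
    arcForm A p q = ∑ u, p u * ∑ v, q v * if A u v then 1 else 0 := by
  simp only [arcForm, Matrix.toBilin'_apply, Matrix.of_apply, mul_sum, mul_assoc, mul_comm (q _)]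

theorem arcForm_nonneg {p q : V → ℝ} (hp : 0 ≤ p) (hq : 0 ≤ q) : 0 ≤ arcForm A p q := by
  rw [arcForm_apply]
  exact sum_nonneg fun u _ => mul_nonneg (hp u) <| sum_nonneg fun v _ =>
    mul_nonneg (hq v) (by positivity)

theorem arcForm_indicator (S T : Finset V) :
    arcForm A ((S : Set V).indicator 1) ((T : Set V).indicator 1) = dArcs A S T := by
  simp only [arcForm_apply, Set.indicator_apply, mem_coe, Pi.one_apply, ite_mul, one_mul, zero_mul,
    sum_ite_mem, univ_inter, dArcs, card_filter, sum_product, Nat.cast_sum, Nat.cast_ite,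
    Nat.cast_one, Nat.cast_zero]

theorem arcForm_single_one (v : V) : arcForm A (Pi.single v 1) 1 = outDeg A v := by
  simp [arcForm_apply, outDeg, Pi.single_apply]

theorem arcForm_one_single (v : V) : arcForm A 1 (Pi.single v 1) = inDeg A v := by
  simp only [arcForm_apply, Pi.one_apply, Pi.single_apply, ite_mul, one_mul, zero_mul, sum_ite_eq',
    mem_univ, if_true, sum_boole, inDeg]

theorem arcForm_single_self {v : V} (hv : ¬ A v v) :
    arcForm A (Pi.single v 1) (Pi.single v 1) = 0 := by
  simp [arcForm, Matrix.toBilin'_single, hv]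

theorem arcForm_add_smul_sub_smul {v : V} (hv : ¬ A v v) (p q : V → ℝ) (t : ℝ) :
    arcForm A (p + t • Pi.single v 1) (q - t • Pi.single v 1) =
      arcForm A p q + t * (arcForm A (Pi.single v 1) q - arcForm A p (Pi.single v 1)) := by
  simp only [map_add, map_sub, map_smul, LinearMap.add_apply, LinearMap.smul_apply, smul_eq_mul,
    arcForm_single_self A hv]
  ring

theorem sum_deg : ∑ v, deg A v = 2 * dArcs A univ univ := by
  have h_out : ∑ v, outDeg A v = dArcs A univ univ := by
    simp only [outDeg, dArcs, card_filter, sum_product]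
  have h_in : ∑ v, inDeg A v = dArcs A univ univ := by
    simp only [inDeg, dArcs, card_filter, sum_product_right]
  simp only [deg, sum_add_distrib, h_out, h_in, two_mul]

theorem sum_deg_sq_le {S : Finset V} {b : ℝ} (hb : 0 ≤ b) (hS : ∀ v ∈ S, (deg A v : ℝ) ≤ b) :
    ∑ v ∈ S, (deg A v : ℝ) ^ 2 ≤ b * (2 * dArcs A univ univ) := by
  calc ∑ v ∈ S, (deg A v : ℝ) ^ 2 ≤ ∑ v ∈ S, b * deg A v :=
        sum_le_sum fun v hv => by rw [sq]; gcongr; exact hS v hv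
    _ = b * ∑ v ∈ S, (deg A v : ℝ) := (mul_sum _ _ _).symm
    _ ≤ b * ∑ v, (deg A v : ℝ) := by gcongr; exact subset_univ S
    _ = b * (2 * dArcs A univ univ) := by rw [← Nat.cast_sum, sum_deg, Nat.cast_mul, Nat.cast_two]

/-- The forward and backward values of the fractional cut that puts the vertex `v` on the first
side with weight `p v`, as a point of the Euclidean plane. -/
noncomputable def cutPair (p : V → ℝ) : WithLp 2 (ℝ × ℝ) :=
  WithLp.toLp 2 (arcForm A p (1 - p), arcForm A (1 - p) p)

theorem sq_sub_add_sq_sub_le {a b z : ℝ} (ha : 0 ≤ a) (hb : 0 ≤ b) (hz : 0 ≤ z) (hz' : z ≤ a + b) :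
    (a - z) ^ 2 + (b - z) ^ 2 ≤ (a + b) ^ 2 := by
  nlinarith [mul_nonneg hz (sub_nonneg.2 hz'), mul_nonneg ha hb]

theorem coordAffine_cutPair (hirr : ∀ v, ¬ A v v) :
    CoordAffine (cutPair A) fun v => (deg A v : ℝ) ^ 2 := by
  intro p hp v
  have h_compl : 0 ≤ 1 - p := sub_nonneg.2 hp.2
  have h_single : (0 : V → ℝ) ≤ Pi.single v 1 := Pi.single_nonneg.2 zero_le_one
  set z : ℝ := arcForm A (Pi.single v 1) p + arcForm A p (Pi.single v 1) with hz
  have hz_nonneg : 0 ≤ z :=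
    add_nonneg (arcForm_nonneg A h_single hp.1) (arcForm_nonneg A hp.1 h_single)
  have h_out : arcForm A (Pi.single v 1) (1 - p) = outDeg A v - arcForm A (Pi.single v 1) p := by
    rw [map_sub, arcForm_single_one]
  have h_in : arcForm A (1 - p) (Pi.single v 1) = inDeg A v - arcForm A p (Pi.single v 1) := by
    rw [map_sub, LinearMap.sub_apply, arcForm_one_single]
  have hz_le : z ≤ outDeg A v + inDeg A v := by
    linarith [arcForm_nonneg A h_single h_compl, arcForm_nonneg A h_compl h_single]
  refine ⟨WithLp.toLp 2 (outDeg A v - z, inDeg A v - z), ?_, fun t => ?_⟩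
  · simpa [WithLp.prod_norm_sq_eq_of_L2, deg] using
      sq_sub_add_sq_sub_le (Nat.cast_nonneg _) (Nat.cast_nonneg _) hz_nonneg hz_le
  · have h_fwd := arcForm_add_smul_sub_smul A (hirr v) p (1 - p) (t - p v)
    have h_bwd := arcForm_add_smul_sub_smul A (hirr v) (1 - p) p (-(t - p v))
    rw [sub_sub] at h_fwd
    rw [neg_smul, ← sub_eq_add_neg, sub_neg_eq_add, sub_sub] at h_bwd
    rw [update_eq_add_smul_single, cutPair, h_fwd, h_bwd, h_out, h_in, hz, cutPair,
      ← WithLp.toLp_smul, ← WithLp.toLp_add, Prod.smul_mk, Prod.mk_add_mk, smul_eq_mul, smul_eq_mul]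
    congr 2 <;> ring

variable {X₁ X₂ Y : Finset V}

theorem gap_swap : gap A X₂ X₁ Y = -gap A X₁ X₂ Y := by
  rw [gap, gap, neg_sub]

theorem four_mul_arcForm_halfCut (hX : Disjoint X₁ X₂) (hY : Disjoint (X₁ ∪ X₂) Y) :
    4 * arcForm A (halfCut X₁ Y) (halfCut X₂ Y) =
      dArcs A (X₁ ∪ X₂ ∪ Y) (X₁ ∪ X₂ ∪ Y) - dArcs A (X₁ ∪ X₂) (X₁ ∪ X₂) + gap A X₁ X₂ Y +
        4 * dArcs A X₁ X₂ := by
  rw [gap]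
  push_cast
  simp only [halfCut, ← arcForm_indicator, indicator_coe_union hY, indicator_coe_union hX, map_add,
    map_smul, LinearMap.add_apply, LinearMap.smul_apply, smul_eq_mul]
  ring

theorem le_arcForm_halfCut (hX : Disjoint X₁ X₂) (hY : Disjoint (X₁ ∪ X₂) Y)
    (h_univ : X₁ ∪ X₂ ∪ Y = univ) :
    ((dArcs A univ univ : ℝ) - dArcs A (X₁ ∪ X₂) (X₁ ∪ X₂) - |gap A X₁ X₂ Y|) / 4 ≤
      arcForm A (halfCut X₁ Y) (halfCut X₂ Y) := by
  have h_eq := four_mul_arcForm_halfCut A hX hY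
  have h_gap : -(|gap A X₁ X₂ Y| : ℝ) ≤ gap A X₁ X₂ Y := neg_abs_le _
  rw [h_univ] at h_eq
  push_cast
  linarith [Nat.cast_nonneg (α := ℝ) (dArcs A X₁ X₂)]

theorem cutPair_indicator (W : Finset V) :
    cutPair A ((W : Set V).indicator 1) =
      WithLp.toLp 2 ((dArcs A W Wᶜ : ℝ), (dArcs A Wᶜ W : ℝ)) := by
  have h_compl : (1 : V → ℝ) - (W : Set V).indicator 1 = ((Wᶜ : Finset V) : Set V).indicator 1 := by
    rw [coe_compl, Set.indicator_compl, Pi.one_def]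
  rw [cutPair, h_compl, arcForm_indicator, arcForm_indicator]

theorem sub_le_min_of_norm_toLp_sub_sq_le {c δ x y x' y' : ℝ} (hδ : 0 ≤ δ) (hx : c ≤ x)
    (hy : c ≤ y) (h : ‖WithLp.toLp 2 (x', y') - WithLp.toLp 2 (x, y)‖ ^ 2 ≤ δ ^ 2) :
    c - δ ≤ min x' y' := by
  have h_sq : (x' - x) ^ 2 + (y' - y) ^ 2 ≤ δ ^ 2 := by
    simpa [WithLp.prod_norm_sq_eq_of_L2] using h
  have hx' : -δ ≤ x' - x := neg_le_of_abs_le <|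
    abs_le_of_sq_le_sq ((le_add_of_nonneg_right (sq_nonneg _)).trans h_sq) hδ
  have hy' : -δ ≤ y' - y := neg_le_of_abs_le <|
    abs_le_of_sq_le_sq ((le_add_of_nonneg_left (sq_nonneg _)).trans h_sq) hδ
  exact le_min (by linarith) (by linarith)

theorem exists_cut_of_sum_deg_sq_le (hirr : ∀ v, ¬ A v v) (hX : Disjoint X₁ X₂)
    (hY : Disjoint (X₁ ∪ X₂) Y) (h_univ : X₁ ∪ X₂ ∪ Y = univ) {δ : ℝ} (hδ : 0 ≤ δ)
    (h_deg : ∑ y ∈ Y, (deg A y : ℝ) ^ 2 ≤ 4 * δ ^ 2) :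
    ∃ W : Finset V,
      ((dArcs A univ univ : ℝ) - dArcs A (X₁ ∪ X₂) (X₁ ∪ X₂) - |gap A X₁ X₂ Y|) / 4 - δ ≤
        min (dArcs A W Wᶜ : ℝ) (dArcs A Wᶜ W) := by
  have hY₁ : Disjoint X₁ Y := hY.mono_left subset_union_left
  obtain ⟨W, hW⟩ := (coordAffine_cutPair A hirr).exists_indicator_norm_sub_sq_le
    (halfCut_mem_Icc hY₁)
  have h_fwd := le_arcForm_halfCut A hX hY h_univ
  have h_bwd := le_arcForm_halfCut A hX.symm (union_comm X₁ X₂ ▸ hY) (union_comm X₁ X₂ ▸ h_univ)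
  rw [union_comm, gap_swap, abs_neg] at h_bwd
  rw [cutPair_indicator, cutPair, one_sub_halfCut hX hY h_univ, sum_halfCut_mul_one_sub hY₁] at hW
  exact ⟨W, sub_le_min_of_norm_toLp_sub_sq_le hδ h_fwd h_bwd (by linarith)⟩

end ArcForm

theorem stmt5_general {V : Type} [Fintype V] [DecidableEq V] (A : V → V → Prop) [DecidableRel A]
    (hirr : ∀ v, ¬ A v v) {d : ℝ} (hd : 1 / 2 < d) {X Y : Finset V} (hXY : X ∪ Y = univ)
    (hdXY : Disjoint X Y) (heX : dArcs A X X = 0) {X₁ : Finset V} (hX₁ : X₁ ⊆ X) {ε : ℝ}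
    (hε : 0 ≤ ε) (hdeg : ∀ y ∈ Y, (deg A y : ℝ) ≤ 2 * ε ^ 2 * dArcs A univ univ) :
    (∃ V₁ V₂ : Finset V, V₁ ∪ V₂ = univ ∧ Disjoint V₁ V₂ ∧
        ((d - 1) / (2 * (2 * d - 1)) - ε) * dArcs A univ univ ≤
          min (dArcs A V₁ V₂ : ℝ) (dArcs A V₂ V₁ : ℝ)) ∨
      (dArcs A univ univ : ℝ) / (2 * d - 1) < (|gap A X₁ (X \ X₁) Y| : ℤ) := by
  rw [or_iff_not_imp_right, not_lt]
  intro h_gap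
  set m : ℝ := ((dArcs A univ univ : ℕ) : ℝ)
  have hX : X₁ ∪ X \ X₁ = X := union_sdiff_of_subset hX₁
  have h_sq : ∑ y ∈ Y, (deg A y : ℝ) ^ 2 ≤ 4 * (ε * m) ^ 2 :=
    (sum_deg_sq_le A (by positivity) hdeg).trans_eq (by ring)
  obtain ⟨W, hW⟩ := exists_cut_of_sum_deg_sq_le A hirr disjoint_sdiff (hX.symm ▸ hdXY)
    (hX.symm ▸ hXY) (by positivity) h_sq
  have h_const : (d - 1) / (2 * (2 * d - 1)) * m = (m - m / (2 * d - 1)) / 4 := by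
    have h_ne : 2 * d - 1 ≠ 0 := by linarith
    rw [show d - 1 = (2 * d - 1 - 1) / 2 by ring]
    generalize 2 * d - 1 = x at h_ne ⊢
    field_simp
    ring
  refine ⟨W, Wᶜ, union_compl W, disjoint_compl_right, le_trans ?_ hW⟩
  rw [hX, heX, Nat.cast_zero, sub_zero, sub_mul, h_const]
  linarith

/-- Lemma 3.1(1). -/
theorem stmt5 {V : Type} [Fintype V] [DecidableEq V] (A : V → V → Prop) [DecidableRel A]
    (hirr : ∀ v, ¬ A v v)
    (m : ℕ) (hm : m = dArcs A Finset.univ Finset.univ)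
    (d : ℕ) (hd : 4 ≤ d) (hout : ∀ x, d ≤ outDeg A x)
    (X Y : Finset V) (hXY : X ∪ Y = Finset.univ) (hdXY : Disjoint X Y)
    (heX : dArcs A X X = 0)
    (θ : ℤ) (hθ : IsLeast {t : ℤ | ∃ X₁ ⊆ X, t = |gap A X₁ (X \ X₁) Y|} θ)
    (ε : ℝ) (hε : 0 < ε) (hdeg : ∀ y ∈ Y, (deg A y : ℝ) ≤ ε ^ 2 * m / 4)
    :
    (∃ V₁ V₂ : Finset V, V₁ ∪ V₂ = Finset.univ ∧ Disjoint V₁ V₂ ∧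
        (((d : ℝ) - 1) / (2 * (2 * (d : ℝ) - 1)) - ε) * m ≤
          min (dArcs A V₁ V₂ : ℝ) (dArcs A V₂ V₁ : ℝ)) ∨
      (m : ℝ) / (2 * (d : ℝ) - 1) < (θ : ℝ) := by
  obtain ⟨⟨X₁, hX₁, rfl⟩, -⟩ := hθ
  have hd' : (1 / 2 : ℝ) < d := by linarith [show (4 : ℝ) ≤ d by exact_mod_cast hd]
  have h_bound : ε ^ 2 * m / 4 ≤ 2 * ε ^ 2 * m := by linarith [show 0 ≤ ε ^ 2 * m by positivity]
  subst hm
  exact stmt5_general A hirr hd' hXY hdXY heX hX₁ hε.le fun y hy => (hdeg y hy).trans h_bound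
end

section
/- Let D be a digraph with m arcs and minimum outdegree d ≥ 4, let X, Y be a partition of V(D) with e(X) = 0, set θ := min{|θ(X₁,X₂)| : X₁,X₂ a partition of X} and X' := {x ∈ X : s(x) ≥ θ}, and let g := Σ_{x∈X∖X'} s(x). Let ε > 0 and suppose every y ∈ Y satisfies d(y) ≤ ε²m/4. Then either there exists a bipartition V(D) = V₁ ∪ V₂ with min{e(V₁,V₂), e(V₂,V₁)} ≥ ((d−1)/(2(2d−1)) − ε)·m, or |X'| = 2k+1 for some integer k ≥ 0 and, writing X' = {v₁,…,v_{2k+1}} with s(v₁) ≥ s(v₂) ≥ … ≥ s(v_{2k+1}), one has Σ_{j=k+1}^{2k+1} s(vⱼ) − Σ_{j=1}^{k} s(vⱼ) ≥ g + θ. -/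
open Finset

/-!
Let `θ` be the least gap and `m` the number of arcs. Both `e(V₁,V₂)` and `e(V₂,V₁)` are read off
from two signed quantities attached to the signing of the vertices given by the bipartition: the
excess of the arcs inside the parts over the arcs across, and the signed sum of the excesses
`s⁺(x)`.

If `(2d-1)θ ≤ m`, fix the signs on `X` by an optimal partition, so that `X` contributes `θ` to the
signed excess. Choose the signs on `Y` one at a time so that `2c · (imbalance) + (signed excess of
Y)²`, a quadratic form in the signs, never exceeds the sum of its diagonal terms, which are the
`s(y)²`. The degree bound on `Y` makes this at most `c²` with `c = 4εm`, and AM-GM then bounds the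
sum of both contributions by `c`.

If `(2d-1)θ > m`, then `d|Y| ≤ m` gives `s(x) ≤ |Y| < 2θ` on `X`. All signed sums of `s` over `X`
are at least `θ` in absolute value. Signing the values below `θ` greedily shows that those over
`X'` are at least `g + θ`. For even `|X'|` this fails on pairing up the elements. For odd `|X'|`,
count a window of `k` consecutive values of the decreasing sequence negatively: shifting the window
by one step changes the signed sum by less than `2θ`, so it cannot change sign, and it is positive
once the window reaches the smallest values.
-/

section AddCommGroup

variable {ι G : Type*} [AddCommGroup G]

lemma sum_insert_update_smul [DecidableEq ι] {T : Finset ι} {a : ι} (ha : a ∉ T) (τ : ι → ℤˣ)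
    (t : ℤˣ) (s : ι → G) :
    ∑ x ∈ insert a T, Function.update τ a t x • s x = t • s a + ∑ x ∈ T, τ x • s x := by
  rw [sum_insert ha, Function.update_self]
  congr 1
  exact sum_congr rfl fun x hx => by rw [Function.update_of_ne (ne_of_mem_of_not_mem hx ha)]

lemma sum_sum_insert [DecidableEq ι] {U : Finset ι} {a : ι} (ha : a ∉ U) (F : ι → ι → G) :
    ∑ u ∈ insert a U, ∑ v ∈ insert a U, F u v
      = F a a + ∑ x ∈ U, (F a x + F x a) + ∑ u ∈ U, ∑ v ∈ U, F u v := by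
  simp only [sum_insert ha, sum_add_distrib]
  abel

variable [LinearOrder G]

lemma exists_sign_smul_eq_neg_abs (b : G) : ∃ t : ℤˣ, t • b = -|b| := by
  rcases abs_choice b with h | h
  · exact ⟨-1, by rw [h, Units.neg_smul, one_smul]⟩
  · exact ⟨1, by rw [h, neg_neg, one_smul]⟩

lemma exists_sign_abs_add_smul_eq (r a : G) : ∃ t : ℤˣ, |r + t • a| = |(|r| - |a|)| := by
  obtain ⟨t, ht⟩ := exists_sign_smul_eq_neg_abs a
  rcases abs_choice r with h | h
  · exact ⟨t, by rw [ht, h, sub_eq_add_neg]⟩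
  · refine ⟨-t, ?_⟩
    rw [Units.neg_smul, ht, h, neg_neg, ← abs_neg, neg_add, sub_eq_add_neg]

lemma le_abs_sum_comp_of_injOn {κ : Type*} [DecidableEq ι] {s : ι → G} {C : G} {I : Finset κ}
    {v : κ → ι} (hv : Set.InjOn v I) (h : ∀ τ : ι → ℤˣ, C ≤ |∑ x ∈ I.image v, τ x • s x|)
    (τ : κ → ℤˣ) : C ≤ |∑ i ∈ I, τ i • s (v i)| := by
  rcases isEmpty_or_nonempty κ with hκ | hκ
  · simpa [eq_empty_of_isEmpty I] using h 1
  · refine (h (τ ∘ Function.invFunOn v I)).trans_eq ?_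
    rw [sum_image hv]
    congr 1
    exact sum_congr rfl fun i hi => by rw [Function.comp_apply, hv.leftInvOn_invFunOn hi]

end AddCommGroup

section CommRing

variable {ι R : Type*} [CommRing R]

lemma sum_ite_smul_eq_two_mul_sum_sub [DecidableEq ι] {B T : Finset ι} (hB : B ⊆ T) (f : ι → R) :
    ∑ j ∈ T, (if j ∈ B then (1 : ℤˣ) else -1) • f j = 2 * ∑ j ∈ B, f j - ∑ j ∈ T, f j := by
  have hin : ∑ j ∈ B, (if j ∈ B then (1 : ℤˣ) else -1) • f j = ∑ j ∈ B, f j :=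
    sum_congr rfl fun j hj => by rw [if_pos hj, one_smul]
  have hout : ∑ j ∈ T \ B, (if j ∈ B then (1 : ℤˣ) else -1) • f j = -∑ j ∈ T \ B, f j := by
    rw [← sum_neg_distrib]
    exact sum_congr rfl fun j hj => by
      rw [if_neg (mem_sdiff.1 hj).2, Units.neg_smul, one_smul]
  rw [← sum_sdiff hB, ← sum_sdiff hB, hin, hout]
  ring

/-- The sum of `f 1, …, f (2k+1)` in which the window `f (i+1), …, f (i+k)` is counted
negatively. Sliding the window moves from the `k` first terms to the `k` last ones. -/
def windowDiff (f : ℕ → R) (k i : ℕ) : R :=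
  ∑ j ∈ Icc 1 (2 * k + 1), f j - 2 * ∑ j ∈ Ico (i + 1) (i + 1 + k), f j

lemma windowDiff_zero (f : ℕ → R) (k : ℕ) :
    windowDiff f k 0 = ∑ j ∈ Icc (k + 1) (2 * k + 1), f j - ∑ j ∈ Icc 1 k, f j := by
  have hunion : Icc 1 (2 * k + 1) = Icc 1 k ∪ Icc (k + 1) (2 * k + 1) := by
    ext; simp only [mem_union, mem_Icc]; omega
  have hdisj : Disjoint (Icc 1 k) (Icc (k + 1) (2 * k + 1)) :=
    disjoint_left.2 fun x => by simp only [mem_Icc]; omega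
  have hwindow : Ico (0 + 1) (0 + 1 + k) = Icc 1 k := by
    ext; simp only [mem_Ico, mem_Icc]; omega
  rw [windowDiff, hwindow, hunion, sum_union hdisj]
  ring

lemma windowDiff_succ_sub (f : ℕ → R) (k i : ℕ) :
    windowDiff f k (i + 1) - windowDiff f k i = 2 * (f (i + 1) - f (i + 1 + k)) := by
  have hshift : ∑ j ∈ Ico (i + 1) (i + 1 + k), f j + f (i + 1 + k)
      = f (i + 1) + ∑ j ∈ Ico (i + 1 + 1) (i + 1 + 1 + k), f j := by
    rw [← sum_Ico_succ_top (by omega), sum_eq_sum_Ico_succ_bot (by omega),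
      add_right_comm (i + 1)]
  simp only [windowDiff]
  linear_combination 2 * hshift

lemma windowDiff_last (f : ℕ → R) (k : ℕ) :
    windowDiff f k (k + 1) = f (k + 1) + ∑ j ∈ range k, (f (1 + j) - f (k + 2 + j)) := by
  have hsplit : ∑ j ∈ Icc 1 (2 * k + 1), f j
      = ∑ j ∈ Ico 1 (k + 1), f j + f (k + 1) + ∑ j ∈ Ico (k + 2) (k + 2 + k), f j := by
    rw [← sum_Ico_succ_top (by omega), sum_Ico_consecutive f (by omega) (by omega)]
    congr 1
    ext
    simp only [mem_Icc, mem_Ico]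
    omega
  rw [windowDiff, hsplit, sum_Ico_eq_sum_range f 1, sum_Ico_eq_sum_range f (k + 2),
    sum_sub_distrib, Nat.add_sub_cancel, Nat.add_sub_cancel_left]
  ring

variable [LinearOrder R] [IsStrictOrderedRing R]

lemma exists_signs_abs_add_sum_lt_or_le (s : ι → R) (θ r : R) (T : Finset ι)
    (hs : ∀ x ∈ T, s x ∈ Set.Ico 0 θ) :
    ∃ τ : ι → ℤˣ, |r + ∑ x ∈ T, τ x • s x| < θ ∨
      |r + ∑ x ∈ T, τ x • s x| ≤ |r| - ∑ x ∈ T, s x := by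
  classical
  induction T using Finset.induction_on with
  | empty => exact ⟨1, by simp⟩
  | insert a T ha ih =>
    obtain ⟨τ, hτ⟩ := ih fun x hx => hs x (mem_insert_of_mem hx)
    obtain ⟨hsa, hsa'⟩ := hs a (mem_insert_self a T)
    obtain ⟨t, ht⟩ := exists_sign_abs_add_smul_eq (r + ∑ x ∈ T, τ x • s x) (s a)
    refine ⟨Function.update τ a t, ?_⟩
    rw [sum_insert_update_smul ha, sum_insert ha, add_left_comm, add_comm (t • s a), ht,
      abs_of_nonneg hsa]
    have := abs_nonneg (r + ∑ x ∈ T, τ x • s x)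
    rcases hτ with h | h
    · exact .inl (abs_sub_lt_of_nonneg_of_lt this h hsa hsa')
    · rcases le_total |r + ∑ x ∈ T, τ x • s x| (s a) with hle | hle
      · exact .inl (abs_lt.2 ⟨by linarith, by linarith⟩)
      · exact .inr (by rw [abs_of_nonneg (by linarith)]; linarith)

lemma exists_signs_abs_sum_lt_of_even_card {s : ι → R} {θ : R} {T : Finset ι} (hθ : 0 < θ)
    (hT : Even #T) (hs : ∀ x ∈ T, ∀ y ∈ T, |s x - s y| < θ) :
    ∃ τ : ι → ℤˣ, |∑ x ∈ T, τ x • s x| < θ := by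
  classical
  obtain ⟨k, hk⟩ := hT
  induction k generalizing T with
  | zero => exact ⟨1, by simpa [card_eq_zero.1 hk] using hθ⟩
  | succ k ih =>
    obtain ⟨a, T₁, ha, rfl, hT₁⟩ := card_eq_succ.1 (show #T = (k + k + 1) + 1 by omega)
    obtain ⟨b, T₂, hb, rfl, hT₂⟩ := card_eq_succ.1 hT₁
    obtain ⟨τ, hτ⟩ := ih (fun x hx y hy => hs x (by simp [hx]) y (by simp [hy])) hT₂
    obtain ⟨t, ht⟩ := exists_sign_abs_add_smul_eq (∑ x ∈ T₂, τ x • s x) (s a - s b)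
    refine ⟨Function.update (Function.update τ b (-t)) a t, ?_⟩
    have hsum : t • s a + (-t • s b + ∑ x ∈ T₂, τ x • s x)
        = ∑ x ∈ T₂, τ x • s x + t • (s a - s b) := by
      rw [Units.neg_smul, smul_sub]; ring
    rw [sum_insert_update_smul ha, sum_insert_update_smul hb, hsum, ht]
    exact abs_sub_lt_of_nonneg_of_lt (abs_nonneg _) hτ (abs_nonneg _)
      (hs a (by simp) b (by simp))

lemma sum_add_le_abs_sum_of_forall_le [DecidableEq ι] {s : ι → R} {θ : R} {L X : Finset ι}
    (hLX : L ⊆ X) (hsmall : ∀ x ∈ X \ L, s x ∈ Set.Ico 0 θ)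
    (h : ∀ τ : ι → ℤˣ, θ ≤ |∑ x ∈ X, τ x • s x|) (τ : ι → ℤˣ) :
    ∑ x ∈ X \ L, s x + θ ≤ |∑ x ∈ L, τ x • s x| := by
  obtain ⟨ρ, hρ⟩ := exists_signs_abs_add_sum_lt_or_le s θ (∑ x ∈ L, τ x • s x) (X \ L) hsmall
  have hglue : ∑ x ∈ X, L.piecewise τ ρ x • s x
      = ∑ x ∈ L, τ x • s x + ∑ x ∈ X \ L, ρ x • s x := by
    rw [← sum_sdiff hLX, add_comm]
    congr 1 <;> refine sum_congr rfl fun x hx => ?_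
    · rw [piecewise_eq_of_mem _ _ _ hx]
    · rw [piecewise_eq_of_notMem _ _ _ (mem_sdiff.1 hx).2]
  have hθ := h (L.piecewise τ ρ)
  rw [hglue] at hθ
  rcases hρ with hρ | hρ <;> linarith

lemma pos_of_abs_sub_lt_of_le_abs {a : ℕ → R} {C : R} {n : ℕ} (ha : ∀ i ≤ n, C ≤ |a i|)
    (hstep : ∀ i < n, |a (i + 1) - a i| < 2 * C) (hn : 0 < a n) : 0 < a 0 := by
  induction n with
  | zero => exact hn
  | succ n ih =>
    refine ih (fun i hi => ha i (by omega)) (fun i hi => hstep i (by omega)) ?_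
    have hlt := abs_lt.1 (hstep n (by omega))
    by_contra hneg
    have h₁ := ha (n + 1) le_rfl
    have h₂ := ha n (by omega)
    rw [abs_of_pos hn] at h₁
    rw [abs_of_nonpos (not_lt.1 hneg)] at h₂
    linarith

lemma le_sum_Icc_sub_sum_Icc {f : ℕ → R} {C : R} {k : ℕ}
    (hanti : AntitoneOn f (Icc 1 (2 * k + 1))) (hmid : 0 ≤ f (k + 1))
    (hdiff : ∀ i ∈ Icc 1 (2 * k + 1), ∀ j ∈ Icc 1 (2 * k + 1), |f i - f j| < C)
    (h : ∀ τ : ℕ → ℤˣ, C ≤ |∑ j ∈ Icc 1 (2 * k + 1), τ j • f j|) :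
    C ≤ ∑ j ∈ Icc (k + 1) (2 * k + 1), f j - ∑ j ∈ Icc 1 k, f j := by
  have habs : ∀ i ≤ k + 1, C ≤ |windowDiff f k i| := fun i hi => by
    rw [windowDiff, abs_sub_comm, ← sum_ite_smul_eq_two_mul_sum_sub
      (fun x => by simp only [mem_Ico, mem_Icc]; omega)]
    exact h _
  have hstep : ∀ i < k + 1, |windowDiff f k (i + 1) - windowDiff f k i| < 2 * C := fun i hi => by
    rw [windowDiff_succ_sub, abs_mul, abs_two]
    gcongr
    exact hdiff _ (by simp only [mem_Icc]; omega) _ (by simp only [mem_Icc]; omega)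
  have hlast_nonneg : 0 ≤ windowDiff f k (k + 1) := by
    rw [windowDiff_last]
    refine add_nonneg hmid (sum_nonneg fun j hj => sub_nonneg.2 ?_)
    rw [mem_range] at hj
    exact hanti (by rw [mem_coe, mem_Icc]; omega) (by rw [mem_coe, mem_Icc]; omega) (by omega)
  have hlast : 0 < windowDiff f k (k + 1) := by
    have hC : 0 < C := (abs_nonneg _).trans_lt (hdiff 1 (by simp) 1 (by simp))
    exact hlast_nonneg.lt_of_ne' (abs_pos.1 (hC.trans_le (habs _ le_rfl)))
  rw [← windowDiff_zero, ← abs_of_pos (pos_of_abs_sub_lt_of_le_abs habs hstep hlast)]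
  exact habs 0 (by omega)

lemma exists_card_eq_and_add_le_sum_Icc_sub_sum_Icc [DecidableEq ι] {s : ι → R} {θ : R}
    {L X : Finset ι} (hθ : 0 < θ) (hLX : L ⊆ X) (hlarge : ∀ x ∈ L, s x ∈ Set.Ico θ (2 * θ))
    (hsmall : ∀ x ∈ X \ L, s x ∈ Set.Ico 0 θ) (h : ∀ τ : ι → ℤˣ, θ ≤ |∑ x ∈ X, τ x • s x|) :
    ∃ k, #L = 2 * k + 1 ∧ ∀ v : ℕ → ι, L = (Icc 1 (2 * k + 1)).image v →
      Set.InjOn v (Icc 1 (2 * k + 1)) →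
      AntitoneOn (fun i => s (v i)) (Icc 1 (2 * k + 1)) →
      ∑ x ∈ X \ L, s x + θ ≤
        ∑ j ∈ Icc (k + 1) (2 * k + 1), s (v j) - ∑ j ∈ Icc 1 k, s (v j) := by
  have hsum := sum_add_le_abs_sum_of_forall_le hLX hsmall h
  have hle : θ ≤ ∑ x ∈ X \ L, s x + θ :=
    le_add_of_nonneg_left (sum_nonneg fun x hx => (hsmall x hx).1)
  have hdiff : ∀ x ∈ L, ∀ y ∈ L, |s x - s y| < θ := fun x hx y hy =>
    abs_lt.2 ⟨by linarith [(hlarge x hx).1, (hlarge y hy).2],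
      by linarith [(hlarge x hx).2, (hlarge y hy).1]⟩
  obtain ⟨k, hk | hk⟩ := Nat.even_or_odd' #L
  · obtain ⟨τ, hτ⟩ := exists_signs_abs_sum_lt_of_even_card hθ ⟨k, hk.trans (two_mul k)⟩ hdiff
    exact absurd (hle.trans (hsum τ)) hτ.not_ge
  refine ⟨k, hk, fun v hv hinj hanti => ?_⟩
  have hvL : ∀ i ∈ Icc 1 (2 * k + 1), v i ∈ L := fun i hi => hv ▸ mem_image_of_mem v hi
  exact le_sum_Icc_sub_sum_Icc hanti
    (hθ.le.trans (hlarge _ (hvL (k + 1) (by simp only [mem_Icc]; omega))).1)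
    (fun i hi j hj => (hdiff _ (hvL i hi) _ (hvL j hj)).trans_le hle)
    (le_abs_sum_comp_of_injOn hinj (hv ▸ hsum))

lemma exists_signs_quadratic_le [DecidableEq ι] (M : ι → ι → R) (τ : ι → ℤˣ) {S T : Finset ι}
    (hST : Disjoint S T) :
    ∃ ρ : ι → ℤˣ, (∀ x ∈ S, ρ x = τ x) ∧
      ∑ u ∈ S ∪ T, ∑ v ∈ S ∪ T, (ρ u * ρ v) • M u v
        ≤ ∑ u ∈ S, ∑ v ∈ S, (τ u * τ v) • M u v + ∑ y ∈ T, M y y := by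
  induction T using Finset.induction_on with
  | empty => exact ⟨τ, by simp⟩
  | insert a T ha ih =>
    obtain ⟨haS, hST'⟩ := disjoint_insert_right.1 hST
    obtain ⟨ρ, hρS, hρ⟩ := ih hST'
    have haU : a ∉ S ∪ T := by simp [haS, ha]
    obtain ⟨t, ht⟩ := exists_sign_smul_eq_neg_abs (∑ x ∈ S ∪ T, ρ x • (M a x + M x a))
    have hρU : ∀ x ∈ S ∪ T, Function.update ρ a t x = ρ x := fun x hx =>
      Function.update_of_ne (ne_of_mem_of_not_mem hx haU) ..
    refine ⟨Function.update ρ a t, fun x hx => ?_, ?_⟩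
    · rw [hρU x (mem_union_left T hx), hρS x hx]
    have hexpand : ∑ u ∈ insert a (S ∪ T), ∑ v ∈ insert a (S ∪ T),
        (Function.update ρ a t u * Function.update ρ a t v) • M u v
        = M a a + t • (∑ x ∈ S ∪ T, ρ x • (M a x + M x a))
          + ∑ u ∈ S ∪ T, ∑ v ∈ S ∪ T, (ρ u * ρ v) • M u v := by
      rw [sum_sum_insert haU, Function.update_self, Int.units_mul_self, one_smul, smul_sum]
      congr 1
      · congr 1
        refine sum_congr rfl fun x hx => ?_
        rw [hρU x hx, mul_comm (ρ x), ← smul_add, mul_smul]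
      · exact sum_congr rfl fun u hu => sum_congr rfl fun v hv => by rw [hρU u hu, hρU v hv]
    rw [union_insert, hexpand, sum_insert ha, ht]
    have := abs_nonneg (∑ x ∈ S ∪ T, ρ x • (M a x + M x a))
    linarith

lemma exists_signs_quadratic_add_abs_le [DecidableEq ι] (a : ι → ι → R) (t : ι → R) (τ : ι → ℤˣ)
    {S T : Finset ι} {c : R} (hST : Disjoint S T) (haS : ∀ u ∈ S, ∀ v ∈ S, a u v = 0)
    (haT : ∀ y ∈ T, a y y = 0) (hc : 0 < c) (ht : ∑ y ∈ T, t y ^ 2 ≤ c ^ 2) :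
    ∃ ρ : ι → ℤˣ, (∀ x ∈ S, ρ x = τ x) ∧
      ∑ u ∈ S ∪ T, ∑ v ∈ S ∪ T, (ρ u * ρ v) • a u v + |∑ y ∈ T, ρ y • t y| ≤ c := by
  set b : ι → R := fun x => if x ∈ T then t x else 0 with hb
  have hbS : ∀ x ∈ S, b x = 0 := fun x hx => if_neg (disjoint_left.1 hST hx)
  obtain ⟨ρ, hρS, hρ⟩ :=
    exists_signs_quadratic_le (fun u v => 2 * c * a u v + b u * b v) τ hST
  refine ⟨ρ, hρS, ?_⟩
  set Q := ∑ u ∈ S ∪ T, ∑ v ∈ S ∪ T, (ρ u * ρ v) • a u v with hQ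
  set L := ∑ y ∈ T, ρ y • t y
  have hbL : ∑ u ∈ S ∪ T, ρ u • b u = L := by
    rw [sum_union hST, sum_eq_zero fun x hx => by rw [hbS x hx, smul_zero], zero_add]
    exact sum_congr rfl fun y hy => by simp only [hb, if_pos hy]
  have hleft : ∑ u ∈ S ∪ T, ∑ v ∈ S ∪ T, (ρ u * ρ v) • (2 * c * a u v + b u * b v)
      = 2 * c * Q + L ^ 2 := by
    rw [← hbL, sq, sum_mul_sum, hQ, mul_sum, ← sum_add_distrib]
    refine sum_congr rfl fun u _ => ?_
    rw [mul_sum, ← sum_add_distrib]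
    exact sum_congr rfl fun v _ => by rw [smul_add, mul_smul_comm, smul_mul_smul_comm]
  have hzero : ∑ u ∈ S, ∑ v ∈ S, (τ u * τ v) • (2 * c * a u v + b u * b v) = 0 :=
    sum_eq_zero fun u hu => sum_eq_zero fun v hv => by simp [haS u hu v hv, hbS u hu]
  have hdiag : ∑ y ∈ T, (2 * c * a y y + b y * b y) = ∑ y ∈ T, t y ^ 2 :=
    sum_congr rfl fun y hy => by simp [haT y hy, hb, hy, sq]
  rw [hleft, hzero, hdiag, zero_add] at hρ
  have hamgm : 2 * (c * |L|) ≤ c ^ 2 + L ^ 2 := by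
    nlinarith [sq_nonneg (c - |L|), sq_abs L]
  refine le_of_mul_le_mul_left ?_ (mul_pos two_pos hc)
  nlinarith

end CommRing

section Digraph

variable {V : Type} [Fintype V] (A : V → V → Prop) [DecidableRel A]

/-- The excess `s⁺(x) = d⁺(x) - d⁻(x)`. -/
def excess (x : V) : ℤ :=
  outDeg A x - inDeg A x

lemma sVal_eq_abs_excess (x : V) : sVal A x = |excess A x| := by
  rw [sVal, excess, abs_eq_max_neg, neg_sub]

lemma sVal_nonneg (x : V) : 0 ≤ sVal A x :=
  (abs_nonneg _).trans_eq (sVal_eq_abs_excess A x).symm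

lemma abs_excess_le_deg (x : V) : |excess A x| ≤ deg A x := by
  rw [abs_le, excess, deg]
  omega

/-- The number of arcs inside the two parts minus the number of arcs across, for the bipartition
of the vertices into the classes `σ = 1` and `σ = -1`. -/
def arcImbalance (σ : V → ℤˣ) : ℤ :=
  ∑ u, ∑ v, (σ u * σ v) • if A u v then 1 else 0

lemma arcImbalance_neg (σ : V → ℤˣ) : arcImbalance A (-σ) = arcImbalance A σ := by
  simp only [arcImbalance, Pi.neg_apply, neg_mul_neg]

lemma sum_smul_excess (σ : V → ℤˣ) :
    ∑ x, σ x • excess A x = ∑ u, ∑ v, ((σ u : ℤ) - σ v) * if A u v then 1 else 0 := by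
  have hout : ∀ x, (outDeg A x : ℤ) = ∑ v, if A x v then 1 else 0 := fun x => by
    simp [outDeg]
  have hin : ∀ x, (inDeg A x : ℤ) = ∑ v, if A v x then 1 else 0 := fun x => by
    simp [inDeg]
  simp only [sub_mul, sum_sub_distrib, excess, smul_sub, hout, hin, Units.smul_def, smul_eq_mul,
    mul_sum]
  congr 1
  exact sum_comm

variable [DecidableEq V]

lemma dArcs_eq_sum (S T : Finset V) :
    dArcs A S T = ∑ u ∈ S, ∑ v ∈ T, if A u v then 1 else 0 := by
  rw [dArcs, card_filter, sum_product]

lemma sum_outDeg_eq_dArcs (S : Finset V) : ∑ x ∈ S, outDeg A x = dArcs A S univ := by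
  simp only [dArcs_eq_sum, outDeg, card_filter]

lemma sum_inDeg_eq_dArcs (S : Finset V) : ∑ x ∈ S, inDeg A x = dArcs A univ S := by
  simp only [dArcs_eq_sum, inDeg, card_filter]
  exact sum_comm

lemma dArcs_mono {S S' T T' : Finset V} (hS : S ⊆ S') (hT : T ⊆ T') :
    dArcs A S T ≤ dArcs A S' T' :=
  card_le_card (filter_subset_filter _ (product_subset_product hS hT))

lemma dArcs_le_card_mul_card (S T : Finset V) : dArcs A S T ≤ #S * #T :=
  (card_filter_le _ _).trans_eq (card_product S T)

variable {A}

lemma mul_card_le_dArcs {d : ℕ} {Y : Finset V} (hd : ∀ y ∈ Y, d ≤ outDeg A y) :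
    d * #Y ≤ dArcs A univ univ := by
  calc d * #Y = #Y • d := mul_comm _ _
    _ ≤ ∑ y ∈ Y, outDeg A y := card_nsmul_le_sum Y _ d hd
    _ = dArcs A Y univ := sum_outDeg_eq_dArcs A Y
    _ ≤ dArcs A univ univ := dArcs_mono A (subset_univ Y) Subset.rfl

lemma sum_excess_sq_le {Y : Finset V} {Δ : ℝ} (hΔ₀ : 0 ≤ Δ)
    (hΔ : ∀ y ∈ Y, (deg A y : ℝ) ≤ Δ) :
    ∑ y ∈ Y, (excess A y : ℝ) ^ 2 ≤ 2 * dArcs A univ univ * Δ := by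
  have hsq : ∀ y ∈ Y, (excess A y : ℝ) ^ 2 ≤ deg A y * Δ := fun y hy => by
    have hle : |(excess A y : ℝ)| ≤ deg A y := by exact_mod_cast abs_excess_le_deg A y
    rw [← sq_abs, sq]
    exact mul_le_mul hle (hle.trans (hΔ y hy)) (abs_nonneg _) (Nat.cast_nonneg _)
  have hdeg : ∑ y ∈ Y, deg A y ≤ 2 * dArcs A univ univ := by
    simp only [deg, sum_add_distrib, sum_outDeg_eq_dArcs, sum_inDeg_eq_dArcs, two_mul]
    exact add_le_add (dArcs_mono A (subset_univ Y) Subset.rfl)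
      (dArcs_mono A Subset.rfl (subset_univ Y))
  calc ∑ y ∈ Y, (excess A y : ℝ) ^ 2 ≤ (∑ y ∈ Y, deg A y : ℕ) * Δ := by
        rw [Nat.cast_sum, sum_mul]
        exact sum_le_sum hsq
    _ ≤ 2 * dArcs A univ univ * Δ := by
        gcongr
        exact_mod_cast hdeg

variable (A) in
lemma four_mul_dArcs (σ : V → ℤˣ) :
    (4 * dArcs A {x | σ x = 1} {x | σ x = -1} : ℤ)
      = dArcs A univ univ + ∑ x, σ x • excess A x - arcImbalance A σ := by
  have hsign : ∀ s t : ℤˣ, (4 * if s = 1 then if t = -1 then 1 else 0 else 0 : ℤ)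
      = 1 + (s - t) - s * t := by decide
  have harc : ∀ u v, (4 * if σ u = 1 then if σ v = -1 then if A u v then 1 else 0 else 0 else 0 : ℤ)
      = (if A u v then 1 else 0) + ((σ u : ℤ) - σ v) * (if A u v then 1 else 0)
        - (σ u * σ v) • (if A u v then 1 else 0) := fun u v => by
    by_cases hA : A u v
    · simpa only [if_pos hA, Units.smul_def, Units.val_mul, smul_eq_mul, mul_one]
        using hsign (σ u) (σ v)
    · simp [hA]
  simp only [dArcs_eq_sum, sum_filter, arcImbalance, sum_smul_excess, Nat.cast_sum, Nat.cast_ite,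
    Nat.cast_one, Nat.cast_zero, ← sum_add_distrib, ← sum_sub_distrib, ← harc, mul_sum]
  refine sum_congr rfl fun u _ => ?_
  split_ifs <;> simp [mul_sum]

variable (A) in
lemma four_mul_dArcs_swap (σ : V → ℤˣ) :
    (4 * dArcs A {x | σ x = -1} {x | σ x = 1} : ℤ)
      = dArcs A univ univ - ∑ x, σ x • excess A x - arcImbalance A σ := by
  have h := four_mul_dArcs A (-σ)
  simpa only [arcImbalance_neg, Pi.neg_apply, neg_eq_iff_eq_neg, neg_neg, Units.neg_smul,
    sum_neg_distrib, ← sub_eq_add_neg] using h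

section Independent

variable {X S : Finset V} (hX : dArcs A X X = 0)
include hX

lemma not_adj_of_dArcs_eq_zero {u v : V} (hu : u ∈ X) (hv : v ∈ X) : ¬ A u v := by
  rw [dArcs, card_eq_zero, filter_eq_empty_iff] at hX
  exact hX (mk_mem_product hu hv)

lemma dArcs_compl_right (hS : S ⊆ X) : dArcs A S Xᶜ = ∑ x ∈ S, outDeg A x := by
  have hSX : ∀ u ∈ S, ∑ v ∈ X, (if A u v then 1 else 0) = 0 := fun u hu =>
    sum_eq_zero fun v hv => if_neg (not_adj_of_dArcs_eq_zero hX (hS hu) hv)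
  rw [sum_outDeg_eq_dArcs, dArcs_eq_sum, dArcs_eq_sum]
  exact sum_congr rfl fun u hu => by rw [← sum_add_sum_compl X, hSX u hu, zero_add]

lemma dArcs_compl_left (hS : S ⊆ X) : dArcs A Xᶜ S = ∑ x ∈ S, inDeg A x := by
  have hXS : ∑ u ∈ X, ∑ v ∈ S, (if A u v then 1 else 0) = 0 :=
    sum_eq_zero fun u hu => sum_eq_zero fun v hv =>
      if_neg (not_adj_of_dArcs_eq_zero hX hu (hS hv))
  rw [sum_inDeg_eq_dArcs, dArcs_eq_sum, dArcs_eq_sum, ← sum_add_sum_compl X, hXS, zero_add]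

lemma sVal_le_card_compl {x : V} (hx : x ∈ X) : sVal A x ≤ #Xᶜ := by
  have hout := dArcs_le_card_mul_card A {x} Xᶜ
  have hin := dArcs_le_card_mul_card A Xᶜ {x}
  rw [dArcs_compl_right hX (singleton_subset_iff.2 hx), sum_singleton, card_singleton] at hout
  rw [dArcs_compl_left hX (singleton_subset_iff.2 hx), sum_singleton, card_singleton] at hin
  rw [sVal]
  omega

lemma gap_eq_sum_sub_sum {X₁ X₂ : Finset V} (h₁ : X₁ ⊆ X) (h₂ : X₂ ⊆ X) :
    gap A X₁ X₂ Xᶜ = ∑ x ∈ X₁, excess A x - ∑ x ∈ X₂, excess A x := by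
  simp only [gap, dArcs_compl_right hX h₁, dArcs_compl_right hX h₂, dArcs_compl_left hX h₁,
    dArcs_compl_left hX h₂, excess, sum_sub_distrib, Nat.cast_sum]
  ring

lemma gap_sdiff_eq_sum_smul {X₁ : Finset V} (h₁ : X₁ ⊆ X) :
    gap A X₁ (X \ X₁) Xᶜ = ∑ x ∈ X, (if x ∈ X₁ then (1 : ℤˣ) else -1) • excess A x := by
  rw [gap_eq_sum_sub_sum hX h₁ sdiff_subset, sum_ite_smul_eq_two_mul_sum_sub h₁,
    sum_sdiff_eq_sub h₁]
  ring

lemma le_abs_sum_smul_sVal {θ : ℤ} (hθ : ∀ X₁ ⊆ X, θ ≤ |gap A X₁ (X \ X₁) Xᶜ|) (τ : V → ℤˣ) :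
    θ ≤ |∑ x ∈ X, τ x • sVal A x| := by
  choose t ht using fun x => exists_sign_smul_eq_neg_abs (excess A x)
  have hle := hθ {x ∈ X | τ x * t x = 1} (filter_subset _ _)
  rw [gap_sdiff_eq_sum_smul hX (filter_subset _ _), ← abs_neg, ← sum_neg_distrib] at hle
  refine hle.trans_eq (congrArg abs (sum_congr rfl fun x hx => ?_))
  have hsign : (if x ∈ {x ∈ X | τ x * t x = 1} then (1 : ℤˣ) else -1) = τ x * t x := by
    rcases Int.units_eq_one_or (τ x * t x) with h | h <;> simp [hx, h]
  rw [hsign, mul_smul, ht, smul_neg, neg_neg, sVal_eq_abs_excess]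

lemma exists_signs_arcImbalance_add_abs_le (hirr : ∀ v, ¬ A v v) {c : ℝ} (hc : 0 < c)
    (hsq : ∑ y ∈ Xᶜ, (excess A y : ℝ) ^ 2 ≤ c ^ 2) (τ : V → ℤˣ) :
    ∃ σ : V → ℤˣ, (∀ x ∈ X, σ x = τ x) ∧
      (arcImbalance A σ : ℝ) + |((∑ y ∈ Xᶜ, σ y • excess A y : ℤ) : ℝ)| ≤ c := by
  obtain ⟨σ, hσX, hσ⟩ := exists_signs_quadratic_add_abs_le
    (fun u v => if A u v then (1 : ℝ) else 0) (fun x => (excess A x : ℝ)) τ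
    disjoint_compl_right 
    (fun u hu v hv => if_neg (not_adj_of_dArcs_eq_zero hX hu hv)) (fun y _ => if_neg (hirr y))
    hc hsq
  refine ⟨σ, hσX, ?_⟩
  rw [union_compl] at hσ
  simpa [arcImbalance, Units.smul_def] using hσ

lemma exists_bipartition_of_sum_excess_sq_le (hirr : ∀ v, ¬ A v v) (hS : S ⊆ X) {c : ℝ}
    (hc : 0 < c) (hsq : ∑ y ∈ Xᶜ, (excess A y : ℝ) ^ 2 ≤ c ^ 2) :
    ∃ V₁ V₂ : Finset V, V₁ ∪ V₂ = univ ∧ Disjoint V₁ V₂ ∧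
      (dArcs A univ univ - |(gap A S (X \ S) Xᶜ : ℝ)| - c) / 4 ≤
        min (dArcs A V₁ V₂ : ℝ) (dArcs A V₂ V₁ : ℝ) := by
  obtain ⟨σ, hσX, hσ⟩ := exists_signs_arcImbalance_add_abs_le hX hirr hc hsq
    fun x => if x ∈ S then 1 else -1
  set L : ℤ := ∑ y ∈ Xᶜ, σ y • excess A y
  have hexcess : ∑ x, σ x • excess A x = gap A S (X \ S) Xᶜ + L := by
    rw [← sum_add_sum_compl X, gap_sdiff_eq_sum_smul hX hS]
    exact congrArg (· + L) (sum_congr rfl fun x hx => by rw [hσX x hx])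
  have h₁₂ := four_mul_dArcs A σ
  have h₂₁ := four_mul_dArcs_swap A σ
  rw [hexcess] at h₁₂ h₂₁
  refine ⟨({x | σ x = 1} : Finset V), ({x | σ x = -1} : Finset V), ?_, ?_, ?_⟩
  · rw [← filter_or, filter_true_of_mem fun x _ => Int.units_eq_one_or (σ x)]
  · exact disjoint_filter.2 fun x _ h => by simp [h]
  rify at h₁₂ h₂₁
  have := abs_add_le (gap A S (X \ S) Xᶜ : ℝ) L
  have := le_abs_self ((gap A S (X \ S) Xᶜ : ℝ) + L)
  have := neg_abs_le ((gap A S (X \ S) Xᶜ : ℝ) + L)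
  refine le_min ?_ ?_ <;> linarith

lemma exists_bipartition_of_mul_abs_gap_le (hirr : ∀ v, ¬ A v v) (hS : S ⊆ X) {d : ℕ} (hd : 1 ≤ d)
    (hgap : (2 * (d : ℤ) - 1) * |gap A S (X \ S) Xᶜ| ≤ dArcs A univ univ) {ε : ℝ} (hε : 0 < ε)
    (hdeg : ∀ y ∈ Xᶜ, (deg A y : ℝ) ≤ 8 * ε ^ 2 * dArcs A univ univ) :
    ∃ V₁ V₂ : Finset V, V₁ ∪ V₂ = univ ∧ Disjoint V₁ V₂ ∧
      (((d : ℝ) - 1) / (2 * (2 * (d : ℝ) - 1)) - ε) * dArcs A univ univ ≤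
        min (dArcs A V₁ V₂ : ℝ) (dArcs A V₂ V₁ : ℝ) := by
  rcases Nat.eq_zero_or_pos (dArcs A univ univ) with hm | hm
  · exact ⟨univ, ∅, union_empty _, disjoint_empty_right _, by simp [hm]⟩
  have hsq : ∑ y ∈ Xᶜ, (excess A y : ℝ) ^ 2 ≤ (4 * ε * dArcs A univ univ) ^ 2 :=
    (sum_excess_sq_le (by positivity) hdeg).trans_eq (by ring)
  obtain ⟨V₁, V₂, hunion, hdisj, hle⟩ :=
    exists_bipartition_of_sum_excess_sq_le hX hirr hS (by positivity) hsq
  refine ⟨V₁, V₂, hunion, hdisj, le_trans ?_ hle⟩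
  have hd' : (0 : ℝ) < 2 * d - 1 := by
    have : (1 : ℝ) ≤ d := by exact_mod_cast hd
    linarith
  have hgap' : |(gap A S (X \ S) Xᶜ : ℝ)| ≤ dArcs A univ univ / (2 * d - 1) := by
    rw [le_div_iff₀ hd', mul_comm]
    exact_mod_cast hgap
  have hcoeff : ((d : ℝ) - 1) / (2 * (2 * d - 1)) = (1 - 1 / (2 * d - 1)) / 4 := by
    rw [one_sub_div hd'.ne', div_div, div_eq_div_iff (by positivity) (by positivity)]
    ring
  calc (((d : ℝ) - 1) / (2 * (2 * d - 1)) - ε) * dArcs A univ univ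
      = (dArcs A univ univ - dArcs A univ univ / (2 * d - 1)
          - 4 * ε * dArcs A univ univ) / 4 := by rw [hcoeff]; ring
    _ ≤ _ := by gcongr

end Independent

end Digraph

theorem stmt7_general {V : Type} [Fintype V] [DecidableEq V] (A : V → V → Prop) [DecidableRel A]
    (hirr : ∀ v, ¬ A v v)
    (m : ℕ) (hm : m = dArcs A Finset.univ Finset.univ)
    (X Y : Finset V) (hXY : X ∪ Y = Finset.univ) (hdXY : Disjoint X Y)
    (heX : dArcs A X X = 0)
    (d : ℕ) (hd : 1 ≤ d) (hout : ∀ y ∈ Y, d ≤ outDeg A y)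
    (θ : ℤ) (hθ : IsLeast {t : ℤ | ∃ X₁ ⊆ X, t = |gap A X₁ (X \ X₁) Y|} θ)
    (X' : Finset V) (hX' : X' = X.filter fun x => θ ≤ sVal A x)
    (g : ℤ) (hg : g = ∑ x ∈ X \ X', sVal A x)
    (ε : ℝ) (hε : 0 < ε) (hdeg : ∀ y ∈ Y, (deg A y : ℝ) ≤ 8 * ε ^ 2 * m) :
    (∃ V₁ V₂ : Finset V, V₁ ∪ V₂ = Finset.univ ∧ Disjoint V₁ V₂ ∧
        (((d : ℝ) - 1) / (2 * (2 * (d : ℝ) - 1)) - ε) * m ≤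
          min (dArcs A V₁ V₂ : ℝ) (dArcs A V₂ V₁ : ℝ)) ∨
      ∃ k : ℕ, X'.card = 2 * k + 1 ∧
        ∀ v : ℕ → V,
          X' = (Finset.Icc 1 (2 * k + 1)).image v →
          Set.InjOn v ↑(Finset.Icc 1 (2 * k + 1)) →
          (∀ i ∈ Finset.Icc 1 (2 * k + 1), ∀ j ∈ Finset.Icc 1 (2 * k + 1), i ≤ j →
            sVal A (v j) ≤ sVal A (v i)) →
          g + θ ≤ (∑ j ∈ Finset.Icc (k + 1) (2 * k + 1), sVal A (v j)) -
            (∑ j ∈ Finset.Icc 1 k, sVal A (v j)) := by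
  obtain rfl : Y = Xᶜ := (IsCompl.of_eq (disjoint_iff.1 hdXY) hXY).compl_eq.symm
  subst hm hg
  obtain ⟨⟨X₁, hX₁, hθ_eq⟩, hθ_le⟩ := hθ
  by_cases hsmall : (2 * (d : ℤ) - 1) * θ ≤ dArcs A univ univ
  · exact .inl (exists_bipartition_of_mul_abs_gap_le heX hirr hX₁ hd (hθ_eq ▸ hsmall) hε hdeg)
  right
  rw [not_le] at hsmall
  have hθ_pos : 0 < θ :=
    pos_of_mul_pos_right ((Nat.cast_nonneg _).trans_lt hsmall) (by omega)
  have hcard : (#Xᶜ : ℤ) < 2 * θ := by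
    have : (d * #Xᶜ : ℤ) ≤ dArcs A univ univ := by exact_mod_cast mul_card_le_dArcs hout
    refine lt_of_mul_lt_mul_left (a := (d : ℤ)) ?_ (by omega)
    linarith
  have hlarge : ∀ x ∈ X', sVal A x ∈ Set.Ico θ (2 * θ) := fun x hx => by
    rw [hX', mem_filter] at hx
    exact ⟨hx.2, (sVal_le_card_compl heX hx.1).trans_lt hcard⟩
  have hrest : ∀ x ∈ X \ X', sVal A x ∈ Set.Ico 0 θ := fun x hx => by
    rw [hX', mem_sdiff, mem_filter, not_and, not_le] at hx
    exact ⟨sVal_nonneg A x, hx.2 hx.1⟩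
  exact exists_card_eq_and_add_le_sum_Icc_sub_sum_Icc hθ_pos (hX' ▸ filter_subset _ _) hlarge hrest
    (le_abs_sum_smul_sVal heX fun S hS => hθ_le ⟨S, hS, rfl⟩)

/-- Lemma 3.1(3). -/
theorem stmt7 {V : Type} [Fintype V] [DecidableEq V] (A : V → V → Prop) [DecidableRel A]
    (hirr : ∀ v, ¬ A v v)
    (m : ℕ) (hm : m = dArcs A Finset.univ Finset.univ)
    (d : ℕ) (hd : 4 ≤ d) (hout : ∀ x, d ≤ outDeg A x)
    (X Y : Finset V) (hXY : X ∪ Y = Finset.univ) (hdXY : Disjoint X Y)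
    (heX : dArcs A X X = 0)
    (θ : ℤ) (hθ : IsLeast {t : ℤ | ∃ X₁ ⊆ X, t = |gap A X₁ (X \ X₁) Y|} θ)
    (X' : Finset V) (hX' : X' = X.filter fun x => θ ≤ sVal A x)
    (g : ℤ) (hg : g = ∑ x ∈ X \ X', sVal A x)
    (ε : ℝ) (hε : 0 < ε) (hdeg : ∀ y ∈ Y, (deg A y : ℝ) ≤ ε ^ 2 * m / 4)
    :
    (∃ V₁ V₂ : Finset V, V₁ ∪ V₂ = Finset.univ ∧ Disjoint V₁ V₂ ∧
        (((d : ℝ) - 1) / (2 * (2 * (d : ℝ) - 1)) - ε) * m ≤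
          min (dArcs A V₁ V₂ : ℝ) (dArcs A V₂ V₁ : ℝ)) ∨
      ∃ k : ℕ, X'.card = 2 * k + 1 ∧
        ∀ v : ℕ → V,
          X' = (Finset.Icc 1 (2 * k + 1)).image v →
          Set.InjOn v ↑(Finset.Icc 1 (2 * k + 1)) →
          (∀ i ∈ Finset.Icc 1 (2 * k + 1), ∀ j ∈ Finset.Icc 1 (2 * k + 1), i ≤ j →
            sVal A (v j) ≤ sVal A (v i)) →
          g + θ ≤ (∑ j ∈ Finset.Icc (k + 1) (2 * k + 1), sVal A (v j)) -
            (∑ j ∈ Finset.Icc 1 k, sVal A (v j)) :=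
  stmt7_general A hirr m hm X Y hXY hdXY heX d (by omega) (fun y _ => hout y) θ hθ X' hX' g hg ε hε
    fun y hy => (hdeg y hy).trans (by linarith [show (0 : ℝ) ≤ ε ^ 2 * m by positivity])
end
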